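/- Let n ≥ 2 and let x₁, x₂ ∈ ℂ[X] be polynomials of degree exactly n−1, both with nonzero constant coefficient, such that x₁·(x₁)~ = x₂·(x₂)~ (i.e., the two signals have the same autocorrelation). Suppose x₂ is not of the form c·x₁ nor of the form c·(x₁)~ for any c ∈ ℂ (i.e., the signals are not equivalent). Then there exist polynomials g, h ∈ ℂ[X] and constants c₁, c₂ ∈ ℂ with |c₁| = |c₂| = 1 such that: (i) (x₁ = c₁·g·h or x₁ = c₁·(g·h)~) and (x₂ = c₂·g·(h~) or x₂ = c₂·(g·(h~))~); (ii) deg g + deg h = n−1 and deg g ≥ 1, deg h ≥ 1; (iii) g(0) ≠ 0, h(0) = 1, and the leading coefficients of g and h are nonzero; (iv) deg g ≥ deg h. -/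

import Mathlib

open Polynomial

/-- The conjugate-reversal of a polynomial: conjugate every coefficient and reverse the
order of the coefficient sequence.  For `P` with `P(0) ≠ 0` this is the polynomial `P~` of
the same degree with `P~(z) = z^{deg P} · conj(P)(1/z)`. -/
noncomputable def conjReverse (p : Polynomial ℂ) : Polynomial ℂ :=
  (p.map (starRingEnd ℂ)).reverse

/-!
Divide `x₁` and `x₂` by their greatest common divisor: `x₁ = g * h` and `x₂ = g * b` with `h`, `b`
coprime. Cancelling `g * g~` from the equality of autocorrelations leaves `h * h~ = b * b~`, so
`b` divides `h~` and `h` divides `b~`. Comparing degrees, `b` is a scalar multiple of `h~`, and the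
scalar is unimodular because `h~` and `b` have the same autocorrelation.

Since `(h * g~)~ = g * h~`, the factors `g` and `h` may be interchanged so that `deg h ≤ deg g`, and
replacing `(g, h)` by `(t * g, h / t)` multiplies `g * h~` by the unimodular number `t / conj t`, so
that `h(0) = 1` may be assumed. If `h` were constant, it would be `1` and `x₂` equivalent to `x₁`.
-/

lemma reverse_reverse_of_coeff_zero_ne_zero {R : Type*} [Semiring R] {f : R[X]}
    (hf : f.coeff 0 ≠ 0) : f.reverse.reverse = f := by
  have hdeg : f.reverse.natDegree = f.natDegree := by
    rw [reverse_natDegree, natTrailingDegree_eq_zero.2 (Or.inr hf), Nat.sub_zero]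
  rw [reverse, hdeg, reverse, reflect_reflect]

lemma reverse_map_of_injective {R S : Type*} [Semiring R] [Semiring S] {φ : R →+* S}
    (hφ : Function.Injective φ) (f : R[X]) : (f.map φ).reverse = f.reverse.map φ := by
  rw [reverse, reverse, natDegree_map_eq_of_injective hφ, reflect_map]

lemma exists_eq_mul_and_eq_mul_isCoprime {R : Type*} [CommRing R] [IsDomain R] [IsBezout R]
    (x y : R) : ∃ d a b : R, x = d * a ∧ y = d * b ∧ IsCoprime a b := by
  classical
  let := IsBezout.toGCDDomain R
  obtain ⟨a, b, ha, hb, hunit⟩ := extract_gcd x y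
  exact ⟨gcd x y, a, b, ha, hb, (gcd_isUnit_iff a b).1 hunit⟩

lemma conjReverse_mul (p q : ℂ[X]) : conjReverse (p * q) = conjReverse p * conjReverse q := by
  simp only [conjReverse, Polynomial.map_mul, reverse_mul_of_domain]

lemma conjReverse_C (c : ℂ) : conjReverse (C c) = C (starRingEnd ℂ c) := by
  simp only [conjReverse, map_C, reverse_C]

lemma conjReverse_smul (c : ℂ) (p : ℂ[X]) :
    conjReverse (c • p) = starRingEnd ℂ c • conjReverse p := by
  simp only [smul_eq_C_mul, conjReverse_mul, conjReverse_C]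

lemma conjReverse_eq_zero {p : ℂ[X]} : conjReverse p = 0 ↔ p = 0 := by
  rw [conjReverse, reverse_eq_zero, Polynomial.map_eq_zero]

lemma natDegree_conjReverse_le (p : ℂ[X]) : (conjReverse p).natDegree ≤ p.natDegree :=
  (reverse_natDegree_le _).trans natDegree_map_le

lemma conjReverse_conjReverse {p : ℂ[X]} (hp : p.coeff 0 ≠ 0) :
    conjReverse (conjReverse p) = p := by
  have hconj : (starRingEnd ℂ).comp (starRingEnd ℂ) = RingHom.id ℂ :=
    RingHom.ext Complex.conj_conj
  rw [conjReverse, conjReverse, reverse_map_of_injective (starRingEnd ℂ).injective p,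
    Polynomial.map_map, hconj, Polynomial.map_id, reverse_reverse_of_coeff_zero_ne_zero hp]

lemma norm_eq_one_of_smul_mul_conjReverse_smul_eq {p : ℂ[X]} {c : ℂ} (hp : p ≠ 0)
    (h : (c • p) * conjReverse (c • p) = p * conjReverse p) : ‖c‖ = 1 := by
  have hscale : (c * starRingEnd ℂ c) • (p * conjReverse p) = (1 : ℂ) • (p * conjReverse p) := by
    rw [one_smul, ← smul_mul_smul_comm, ← conjReverse_smul, h]
  have hsq : c * starRingEnd ℂ c = 1 :=
    smul_left_injective ℂ (mul_ne_zero hp (conjReverse_eq_zero.not.2 hp)) hscale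
  rw [Complex.mul_conj', ← Complex.ofReal_pow, Complex.ofReal_eq_one] at hsq
  exact (pow_eq_one_iff_of_nonneg (norm_nonneg c) two_ne_zero).1 hsq

lemma exists_eq_smul_conjReverse_of_isCoprime {a b : ℂ[X]} (hab : IsCoprime a b)
    (ha : a.coeff 0 ≠ 0) (h : a * conjReverse a = b * conjReverse b) :
    ∃ c : ℂ, ‖c‖ = 1 ∧ b = c • conjReverse a := by
  have ha_ne : a ≠ 0 := ne_of_apply_ne (coeff · 0) ha
  have hrev_ne : conjReverse a ≠ 0 := conjReverse_eq_zero.not.2 ha_ne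
  have hb_ne : b ≠ 0 := left_ne_zero_of_mul (h ▸ mul_ne_zero ha_ne hrev_ne)
  have hb_dvd : b ∣ conjReverse a := hab.symm.dvd_of_dvd_mul_left (h ▸ dvd_mul_right b _)
  have ha_dvd : a ∣ conjReverse b := hab.dvd_of_dvd_mul_left (h ▸ dvd_mul_right a _)
  have hdeg : (conjReverse a).natDegree ≤ b.natDegree := calc
    (conjReverse a).natDegree ≤ a.natDegree := natDegree_conjReverse_le a
    _ ≤ (conjReverse b).natDegree := natDegree_le_of_dvd ha_dvd (conjReverse_eq_zero.not.2 hb_ne)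
    _ ≤ b.natDegree := natDegree_conjReverse_le b
  obtain ⟨c, hc⟩ : ∃ c : ℂ, b = c • conjReverse a := by
    obtain ⟨u, hu⟩ := (associated_of_dvd_of_natDegree_le hb_dvd hrev_ne hdeg).symm
    obtain ⟨c, -, hcu⟩ := Polynomial.isUnit_iff.1 u.isUnit
    exact ⟨c, by rw [smul_eq_C_mul, hcu, mul_comm, hu]⟩
  refine ⟨c, norm_eq_one_of_smul_mul_conjReverse_smul_eq hrev_ne ?_, hc⟩
  rw [← hc, ← h, conjReverse_conjReverse ha, mul_comm]

lemma exists_eq_mul_and_eq_smul_mul_conjReverse {p q : ℂ[X]} (hp : p.coeff 0 ≠ 0)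
    (hpq : p * conjReverse p = q * conjReverse q) :
    ∃ (g h : ℂ[X]) (c : ℂ), ‖c‖ = 1 ∧ p = g * h ∧ q = c • (g * conjReverse h) := by
  obtain ⟨g, h, b, rfl, rfl, hcop⟩ := exists_eq_mul_and_eq_mul_isCoprime p q
  obtain ⟨hg, hh⟩ := mul_ne_zero_iff.1 (mul_coeff_zero g h ▸ hp)
  have hg_ne : g ≠ 0 := ne_of_apply_ne (coeff · 0) hg
  have hcancel : h * conjReverse h = b * conjReverse b := by
    refine mul_left_cancel₀ (mul_ne_zero hg_ne (conjReverse_eq_zero.not.2 hg_ne)) ?_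
    rwa [conjReverse_mul, conjReverse_mul, mul_mul_mul_comm, mul_mul_mul_comm g b] at hpq
  obtain ⟨c, hc, hb⟩ := exists_eq_smul_conjReverse_of_isCoprime hcop hh hcancel
  exact ⟨g, h, c, hc, rfl, by rw [hb, mul_smul_comm]⟩

/-- Equivalence of the signals encoded by `p` and `q`: they agree up to a unimodular factor and
conjugate-reversal. It relates the two signals of the theorem to `g * h` and `g * h~`. Meant for
nonzero constant coefficients: `conjReverse` forgets the order of vanishing at zero, so otherwise
the relation is not symmetric. -/
def SignalEquiv (p q : ℂ[X]) : Prop :=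
  ∃ c : ℂ, ‖c‖ = 1 ∧ (p = c • q ∨ p = c • conjReverse q)

lemma SignalEquiv.smul_right {p q : ℂ[X]} {c : ℂ} (hpq : SignalEquiv p q) (hc : ‖c‖ = 1) :
    SignalEquiv p (c • q) := by
  have hc_ne : c ≠ 0 := norm_ne_zero_iff.1 (hc ▸ one_ne_zero)
  obtain ⟨d, hd, rfl | rfl⟩ := hpq
  · refine ⟨d * c⁻¹, by rw [norm_mul, norm_inv, hc, hd, inv_one, mul_one], Or.inl ?_⟩
    rw [smul_smul, inv_mul_cancel_right₀ hc_ne]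
  · refine ⟨d * (starRingEnd ℂ c)⁻¹, ?_, Or.inr ?_⟩
    · rw [norm_mul, norm_inv, RCLike.norm_conj, hc, hd, inv_one, mul_one]
    · rw [conjReverse_smul, smul_smul,
        inv_mul_cancel_right₀ ((map_ne_zero (starRingEnd ℂ)).2 hc_ne)]

lemma exists_signalEquiv_mul_conjReverse_natDegree_le {p q : ℂ[X]} (hp : p.coeff 0 ≠ 0)
    (hpq : p * conjReverse p = q * conjReverse q) :
    ∃ g h : ℂ[X], p = g * h ∧ SignalEquiv q (g * conjReverse h) ∧
      h.natDegree ≤ g.natDegree := by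
  obtain ⟨g, h, c, hc, rfl, rfl⟩ := exists_eq_mul_and_eq_smul_mul_conjReverse hp hpq
  have hg : g.coeff 0 ≠ 0 := left_ne_zero_of_mul (mul_coeff_zero g h ▸ hp)
  rcases le_total h.natDegree g.natDegree with hle | hle
  · exact ⟨g, h, rfl, ⟨c, hc, Or.inl rfl⟩, hle⟩
  · refine ⟨h, g, mul_comm g h, ⟨c, hc, Or.inr ?_⟩, hle⟩
    rw [conjReverse_mul, conjReverse_conjReverse hg, mul_comm]

lemma exists_signalEquiv_mul_conjReverse_coeff_zero_eq_one {p q : ℂ[X]} (hp : p.coeff 0 ≠ 0)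
    (hpq : p * conjReverse p = q * conjReverse q) :
    ∃ g h : ℂ[X], p = g * h ∧ SignalEquiv q (g * conjReverse h) ∧
      h.natDegree ≤ g.natDegree ∧ h.coeff 0 = 1 := by
  obtain ⟨g, h, rfl, hequiv, hle⟩ := exists_signalEquiv_mul_conjReverse_natDegree_le hp hpq
  have hh : h.coeff 0 ≠ 0 := right_ne_zero_of_mul (mul_coeff_zero g h ▸ hp)
  set t := h.coeff 0 with ht
  refine ⟨t • g, t⁻¹ • h, ?_, ?_, ?_, ?_⟩
  · rw [smul_mul_smul_comm, mul_inv_cancel₀ hh, one_smul]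
  · rw [conjReverse_smul, smul_mul_smul_comm]
    refine hequiv.smul_right ?_
    rw [norm_mul, RCLike.norm_conj, ← norm_mul, mul_inv_cancel₀ hh, norm_one]
  · rwa [natDegree_smul _ hh, natDegree_smul _ (inv_ne_zero hh)]
  · rw [coeff_smul, ← ht, smul_eq_mul, inv_mul_cancel₀ hh]

/-- If `x₁, x₂` are polynomials of degree exactly `n−1 ≥ 1` with nonzero constant
coefficients having the same autocorrelation (`x₁ x₁~ = x₂ x₂~`), and `x₂` is equivalent
neither to `x₁` nor to `x₁~` (up to a scalar), then there is a factorization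
`x₁ ≡ g h`, `x₂ ≡ g h~` (up to unimodular constants and conjugate-reversal), where
`deg g + deg h = n − 1`, `deg g ≥ deg h ≥ 1`, `g(0) ≠ 0`, `h(0) = 1`, and the leading
coefficients of `g` and `h` are nonzero. -/
theorem autocorrelation_factorization
    (n : ℕ) (hn : 2 ≤ n) (x₁ x₂ : Polynomial ℂ)
    (hd1 : x₁.natDegree = n - 1) (hd2 : x₂.natDegree = n - 1)
    (hc1 : x₁.coeff 0 ≠ 0) (hc2 : x₂.coeff 0 ≠ 0)
    (hauto : x₁ * conjReverse x₁ = x₂ * conjReverse x₂)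
    (hneq : ∀ c : ℂ, x₂ ≠ c • x₁ ∧ x₂ ≠ c • conjReverse x₁) :
    ∃ (g h : Polynomial ℂ) (c₁ c₂ : ℂ), ‖c₁‖ = 1 ∧ ‖c₂‖ = 1 ∧
      (x₁ = c₁ • (g * h) ∨ x₁ = c₁ • conjReverse (g * h)) ∧
      (x₂ = c₂ • (g * conjReverse h) ∨ x₂ = c₂ • conjReverse (g * conjReverse h)) ∧
      g.natDegree + h.natDegree = n - 1 ∧ 1 ≤ g.natDegree ∧ 1 ≤ h.natDegree ∧
      g.coeff 0 ≠ 0 ∧ h.coeff 0 = 1 ∧ g.leadingCoeff ≠ 0 ∧ h.leadingCoeff ≠ 0 ∧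
      h.natDegree ≤ g.natDegree := by
  obtain ⟨g, h, rfl, ⟨c, hc, hx₂⟩, hle, hh⟩ :=
    exists_signalEquiv_mul_conjReverse_coeff_zero_eq_one hc1 hauto
  obtain ⟨hg_ne, hh_ne⟩ : g ≠ 0 ∧ h ≠ 0 :=
    mul_ne_zero_iff.1 (ne_of_apply_ne (coeff · 0) hc1)
  have hg : g.coeff 0 ≠ 0 := left_ne_zero_of_mul (mul_coeff_zero g h ▸ hc1)
  have hdeg : 1 ≤ h.natDegree := by
    by_contra! hlt
    obtain rfl : h = 1 := by
      rw [eq_C_of_natDegree_eq_zero (Nat.lt_one_iff.1 hlt), hh, C_1]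
    have hone : conjReverse 1 = 1 := by rw [← C_1, conjReverse_C, map_one]
    rw [hone] at hx₂
    exact hx₂.elim (hneq c).1 (hneq c).2
  exact ⟨g, h, 1, c, norm_one, hc, Or.inl (one_smul ℂ _).symm, hx₂,
    natDegree_mul hg_ne hh_ne ▸ hd1, hdeg.trans hle, hdeg, hg, hh,
    leadingCoeff_ne_zero.2 hg_ne, leadingCoeff_ne_zero.2 hh_ne, hle⟩
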